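/- Let n ∈ ℕ, d ∈ ℝ, p ∈ S^d(ℝⁿ × ℝⁿ), and u ∈ C₀^∞(ℝⁿ). Then for every x ∈ ℝⁿ, Op(p)u(x) = lim_{λ→0} (2π)^{−n} ∫_{ℝⁿ} ∫_{ℝⁿ} e^{i ξ·(x−y)} e^{−λ² |ξ|²} p(x,ξ) u(y) dy dξ, where for each λ ≠ 0 the double integral converges absolutely. -/

import Mathlib

/- STATEMENT 9: Gaussian-regularization identity
   Op(p)u(x) = lim_{λ→0} (2π)^{−n} ∫∫ e^{iξ·(x−y)} e^{−λ²|ξ|²} p(x,ξ) u(y) dy dξ,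
   with absolute convergence of the double integral for λ ≠ 0. -/

noncomputable section
open MeasureTheory Metric Set Complex
open scoped Topology

/-- `ℝⁿ` with the Euclidean norm. -/
abbrev Rn (n : ℕ) : Type := EuclideanSpace ℝ (Fin n)

variable {n : ℕ}

/-- The real dot product `a·b = Σ aⱼ bⱼ` on `ℝⁿ`. -/
def dotR (a b : Rn n) : ℝ := ∑ j, a j * b j
/-- The Japanese bracket `⟨ξ⟩ = (1 + |ξ|²)^{1/2}`. -/
def jap (ξ : Rn n) : ℝ := Real.sqrt (1 + ‖ξ‖ ^ 2)

/-- Directional derivative, as an operation on functions. -/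
def pderivDir (v : Rn n × Rn n) (f : Rn n × Rn n → ℂ) : Rn n × Rn n → ℂ :=
  fun q => fderiv ℝ f q v

/-- The list of directions encoding a multi-index `α`. -/
def multiDirs (mk : Fin n → Rn n × Rn n) (α : Fin n → ℕ) : List (Rn n × Rn n) :=
  (List.finRange n).flatMap fun j => List.replicate (α j) (mk j)

/-- The `i`-th coordinate direction in the `x`-variable. -/
def dirX (i : Fin n) : Rn n × Rn n := (EuclideanSpace.single i 1, 0)
/-- The `i`-th coordinate direction in the `ξ`-variable. -/
def dirXi (i : Fin n) : Rn n × Rn n := (0, EuclideanSpace.single i 1)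

/-- The iterated partial derivative `∂_x^β ∂_ξ^α p`. -/
def mderiv (β α : Fin n → ℕ) (p : Rn n → Rn n → ℂ) : Rn n × Rn n → ℂ :=
  (multiDirs dirX β ++ multiDirs dirXi α).foldr pderivDir fun q => p q.1 q.2

/-- The Hörmander symbol class `S^d(ℝⁿ × ℝⁿ)`. -/
def IsSymbol (n : ℕ) (d : ℝ) (p : Rn n → Rn n → ℂ) : Prop :=
  ContDiff ℝ (⊤ : ℕ∞) (fun q : Rn n × Rn n => p q.1 q.2) ∧
    ∀ α β : Fin n → ℕ, ∃ C : ℝ, ∀ x ξ : Rn n,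
      jap ξ ^ (((∑ j, α j : ℕ) : ℝ) - d) * ‖mderiv β α p (x, ξ)‖ ≤ C

/-- The Fourier transform `𝔉u(ξ) = ∫ e^{−i y·ξ} u(y) dy`. -/
def fourierT (n : ℕ) (u : Rn n → ℂ) (ξ : Rn n) : ℂ :=
  ∫ y : Rn n, Complex.exp (-(Complex.I * (dotR y ξ : ℂ))) * u y

/-- The pseudodifferential operator
`Op(p)u(x) = (2π)^{−n} ∫ e^{i x·ξ} p(x,ξ) 𝔉u(ξ) dξ`. -/
def Op (n : ℕ) (p : Rn n → Rn n → ℂ) (u : Rn n → ℂ) (x : Rn n) : ℂ :=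
  ((2 * Real.pi : ℂ) ^ n)⁻¹ *
    ∫ ξ : Rn n, Complex.exp (Complex.I * (dotR x ξ : ℂ)) * p x ξ * fourierT n u ξ

lemma dotR_eq_inner (a b : Rn n) : dotR a b = inner ℝ a b := by
  simp [dotR, PiLp.inner_apply, mul_comm]

lemma symbol_bound {d : ℝ} {p : Rn n → Rn n → ℂ} (hp : IsSymbol n d p) (x : Rn n) :
    ∃ C : ℝ, 0 ≤ C ∧ ∃ m : ℕ, ∀ ξ, ‖p x ξ‖ ≤ C * (1 + ‖ξ‖) ^ m := by
  obtain ⟨C, hC⟩ := hp.2 0 0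
  refine ⟨|C|, abs_nonneg _, ⌈|d|⌉₊, fun ξ => ?_⟩
  have h := hC x ξ
  have hm : mderiv 0 0 p (x, ξ) = p x ξ := by
    have h0 : ∀ mk : Fin n → Rn n × Rn n, multiDirs mk 0 = [] := by
      intro mk; simp [multiDirs]
    simp [mderiv, h0]
  rw [hm] at h
  have hj1 : 1 ≤ jap ξ := by
    unfold jap
    rw [Real.one_le_sqrt]
    nlinarith [sq_nonneg ‖ξ‖]
  have hj2 : jap ξ ≤ 1 + ‖ξ‖ := by
    unfold jap
    rw [Real.sqrt_le_left (by positivity)]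
    nlinarith [norm_nonneg ξ]
  have hj0 : 0 < jap ξ := by linarith
  have h2 : ‖p x ξ‖ ≤ |C| * jap ξ ^ d := by
    have hs : (((∑ j, (0 : Fin n → ℕ) j : ℕ) : ℝ) - d) = -d := by simp
    rw [hs, Real.rpow_neg hj0.le, inv_mul_le_iff₀ (Real.rpow_pos_of_pos hj0 d)] at h
    calc ‖p x ξ‖ ≤ jap ξ ^ d * C := h
      _ ≤ jap ξ ^ d * |C| := by gcongr; exact le_abs_self C
      _ = _ := mul_comm _ _
  refine h2.trans ?_
  gcongr
  calc jap ξ ^ d ≤ jap ξ ^ ((⌈|d|⌉₊ : ℕ) : ℝ) :=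
        Real.rpow_le_rpow_of_exponent_le hj1 ((le_abs_self d).trans (Nat.le_ceil _))
    _ = jap ξ ^ ⌈|d|⌉₊ := Real.rpow_natCast _ _
    _ ≤ _ := by gcongr

lemma gauss_bound (k : ℕ) (l : ℝ) (hl : l ≠ 0) :
    ∃ K : ℝ, ∀ r : ℝ, 0 ≤ r → (1 + r) ^ k * Real.exp (-(l ^ 2 * r ^ 2)) ≤ K := by
  have hl2 : 0 < l ^ 2 := by positivity
  refine ⟨(k.factorial : ℝ) * Real.exp (l ^ 2) / (l ^ 2 / 2) ^ k, fun r hr => ?_⟩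
  rw [le_div_iff₀ (by positivity)]
  have h1 := Real.pow_div_factorial_le_exp (l ^ 2 / 2 * (1 + r) ^ 2) (by positivity) k
  rw [div_le_iff₀ (by positivity)] at h1
  have h2 : Real.exp (l ^ 2 / 2 * (1 + r) ^ 2) ≤ Real.exp (l ^ 2) * Real.exp (l ^ 2 * r ^ 2) := by
    rw [← Real.exp_add, Real.exp_le_exp]
    nlinarith [mul_nonneg hl2.le (sq_nonneg (1 - r))]
  have h3 : (1 + r) ^ k ≤ ((1 + r) ^ 2) ^ k := by
    apply pow_le_pow_left₀ (by positivity)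
    nlinarith
  have h4 : (l ^ 2 / 2) ^ k * (1 + r) ^ k ≤
      Real.exp (l ^ 2) * Real.exp (l ^ 2 * r ^ 2) * k.factorial := by
    calc (l ^ 2 / 2) ^ k * (1 + r) ^ k ≤ (l ^ 2 / 2) ^ k * ((1 + r) ^ 2) ^ k := by gcongr
      _ = (l ^ 2 / 2 * (1 + r) ^ 2) ^ k := (mul_pow _ _ _).symm
      _ ≤ _ := h1
      _ ≤ _ := by gcongr
  have h5 : Real.exp (l ^ 2 * r ^ 2) * Real.exp (-(l ^ 2 * r ^ 2)) = 1 := by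
    rw [← Real.exp_add]; simp
  calc (1 + r) ^ k * Real.exp (-(l ^ 2 * r ^ 2)) * (l ^ 2 / 2) ^ k
      = ((l ^ 2 / 2) ^ k * (1 + r) ^ k) * Real.exp (-(l ^ 2 * r ^ 2)) := by ring
    _ ≤ (Real.exp (l ^ 2) * Real.exp (l ^ 2 * r ^ 2) * k.factorial)
          * Real.exp (-(l ^ 2 * r ^ 2)) := by gcongr
    _ = Real.exp (l ^ 2) * k.factorial *
          (Real.exp (l ^ 2 * r ^ 2) * Real.exp (-(l ^ 2 * r ^ 2))) := by ring
    _ = _ := by rw [h5]; ring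

lemma integrable_of_decay {f : Rn n → ℂ} (hf : AEStronglyMeasurable f volume) {K : ℝ}
    (hK : ∀ ξ, (1 + ‖ξ‖) ^ (n + 1) * ‖f ξ‖ ≤ K) : Integrable f := by
  have h := (integrable_one_add_norm (E := Rn n) (μ := volume) (r := ((n + 1 : ℕ) : ℝ))
    (by simp)).const_mul K
  refine h.mono' hf (Filter.Eventually.of_forall fun ξ => ?_)
  have h1 : (0 : ℝ) < 1 + ‖ξ‖ := by positivity
  rw [Real.rpow_neg h1.le, Real.rpow_natCast, ← div_eq_mul_inv, le_div_iff₀ (by positivity)]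
  linarith [hK ξ]

lemma fourierT_eq (u : Rn n → ℂ) (ξ : Rn n) :
    fourierT n u ξ = FourierTransform.fourier u ((2 * Real.pi)⁻¹ • ξ) := by
  rw [Real.fourier_eq', fourierT]
  congr 1
  ext y
  rw [dotR_eq_inner, inner_smul_right, smul_eq_mul]
  congr 2
  have : (-2 * Real.pi * ((2 * Real.pi)⁻¹ * inner ℝ y ξ)) = - inner ℝ y ξ := by
    field_simp
  rw [this]; push_cast; ring

lemma fourierT_decay {u : Rn n → ℂ} (hu : ContDiff ℝ (⊤ : ℕ∞) u) (hs : HasCompactSupport u) :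
    Continuous (fourierT n u) ∧
    ∀ k : ℕ, ∃ K : ℝ, ∀ ξ, (1 + ‖ξ‖) ^ k * ‖fourierT n u ξ‖ ≤ K := by
  set U : SchwartzMap (Rn n) ℂ := hs.toSchwartzMap hu with hU
  have hc : ∀ ξ, fourierT n u ξ = (FourierTransform.fourier U) ((2 * Real.pi)⁻¹ • ξ) := by
    intro ξ
    rw [fourierT_eq, SchwartzMap.fourier_coe]
    rfl
  refine ⟨?_, fun k => ?_⟩
  · have : fourierT n u = fun ξ => (FourierTransform.fourier U) ((2 * Real.pi)⁻¹ • ξ) := funext hc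
    rw [this]
    exact (SchwartzMap.continuous _).comp (continuous_const_smul _)
  · obtain ⟨K, hK⟩ : ∃ K : ℝ, ∀ η, (1 + ‖η‖) ^ k * ‖(FourierTransform.fourier U) η‖ ≤ K := by
      have := SchwartzMap.one_add_le_sup_seminorm_apply (𝕜 := ℝ) (m := (k, 0)) (k := k) (n := 0)
        le_rfl le_rfl (FourierTransform.fourier U)
      simp only [norm_iteratedFDeriv_zero] at this
      exact ⟨_, this⟩
    refine ⟨(2 * Real.pi) ^ k * K, fun ξ => ?_⟩
    rw [hc]
    have hpi : 1 ≤ 2 * Real.pi := by linarith [Real.pi_gt_three]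
    have h1 : 1 + ‖ξ‖ ≤ 2 * Real.pi * (1 + ‖(2 * Real.pi)⁻¹ • ξ‖) := by
      rw [norm_smul, Real.norm_of_nonneg (by positivity), mul_add,
        mul_inv_cancel_left₀ (by positivity)]
      linarith
    calc _ ≤ (2 * Real.pi * (1 + ‖(2 * Real.pi)⁻¹ • ξ‖)) ^ k * _ := by gcongr
      _ = (2 * Real.pi) ^ k * ((1 + ‖(2 * Real.pi)⁻¹ • ξ‖) ^ k *
            ‖(FourierTransform.fourier U) ((2 * Real.pi)⁻¹ • ξ)‖) := by rw [mul_pow]; ring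
      _ ≤ _ := by gcongr; exact hK _

lemma continuous_dotR : Continuous (fun q : Rn n × Rn n => dotR q.1 q.2) := by
  unfold dotR; fun_prop

lemma norm_exp_I_mul (t : ℝ) : ‖Complex.exp (Complex.I * (t : ℂ))‖ = 1 := by
  rw [mul_comm]; exact Complex.norm_exp_ofReal_mul_I t

lemma norm_gauss (t : ℝ) : ‖Complex.exp (-(t : ℂ))‖ = Real.exp (-t) := by
  rw [← Complex.ofReal_neg, Complex.norm_exp_ofReal]

lemma inner_integral (p : Rn n → Rn n → ℂ) (u : Rn n → ℂ) (x : Rn n) (lam : ℝ) (ξ : Rn n) :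
    (∫ y : Rn n, Complex.exp (Complex.I * (dotR ξ (x - y) : ℂ)) *
              Complex.exp (-(lam ^ 2 * ‖ξ‖ ^ 2 : ℝ)) * p x ξ * u y) =
    Complex.exp (-(lam ^ 2 * ‖ξ‖ ^ 2 : ℝ)) *
      (Complex.exp (Complex.I * (dotR x ξ : ℂ)) * p x ξ * fourierT n u ξ) := by
  rw [fourierT, ← integral_const_mul, ← integral_const_mul]
  congr 1
  ext y
  have : Complex.exp (Complex.I * (dotR ξ (x - y) : ℂ)) =
      Complex.exp (Complex.I * (dotR x ξ : ℂ)) * Complex.exp (-(Complex.I * (dotR y ξ : ℂ))) := by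
    rw [← Complex.exp_add]
    congr 1
    rw [dotR_eq_inner, dotR_eq_inner, dotR_eq_inner, inner_sub_right, real_inner_comm x,
      real_inner_comm y]
    push_cast; ring
  rw [this]; ring

theorem statement9
    (n : ℕ) (d : ℝ)
    (p : Rn n → Rn n → ℂ) (hp : IsSymbol n d p)
    (u : Rn n → ℂ) (hu : ContDiff ℝ (⊤ : ℕ∞) u) (husupp : HasCompactSupport u)
    (x : Rn n) :
    -- absolute convergence of the double integral for every `λ ≠ 0`
    (∀ lam : ℝ, lam ≠ 0 →
      Integrable (fun q : Rn n × Rn n =>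
        Complex.exp (Complex.I * (dotR q.1 (x - q.2) : ℂ)) *
          Complex.exp (-(lam ^ 2 * ‖q.1‖ ^ 2 : ℝ)) * p x q.1 * u q.2)) ∧
    -- `Op(p)u(x)` is the limit, as `λ → 0`, of the regularized integrals
    Filter.Tendsto
      (fun lam : ℝ =>
        ((2 * Real.pi : ℂ) ^ n)⁻¹ *
          ∫ ξ : Rn n, ∫ y : Rn n,
            Complex.exp (Complex.I * (dotR ξ (x - y) : ℂ)) *
              Complex.exp (-(lam ^ 2 * ‖ξ‖ ^ 2 : ℝ)) * p x ξ * u y)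
      (𝓝[≠] (0 : ℝ)) (𝓝 (Op n p u x)) := by
  obtain ⟨C, hC0, m, hC⟩ := symbol_bound hp x
  have hpc : Continuous (p x) :=
    hp.1.continuous.comp (by fun_prop : Continuous fun ξ : Rn n => (x, ξ))
  obtain ⟨hFc, hFd⟩ := fourierT_decay hu husupp
  constructor
  · intro lam hlam
    have hg : Integrable (fun ξ : Rn n =>
        Complex.exp (-(lam ^ 2 * ‖ξ‖ ^ 2 : ℝ)) * p x ξ) := by
      obtain ⟨K, hK⟩ := gauss_bound (n + 1 + m) lam hlam
      refine integrable_of_decay (K := C * K)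
        (Continuous.aestronglyMeasurable (by fun_prop)) fun ξ => ?_
      rw [norm_mul, norm_gauss]
      calc _ ≤ (1 + ‖ξ‖) ^ (n + 1) *
            (Real.exp (-(lam ^ 2 * ‖ξ‖ ^ 2)) * (C * (1 + ‖ξ‖) ^ m)) := by
              gcongr; exact hC ξ
        _ = C * ((1 + ‖ξ‖) ^ (n + 1 + m) * Real.exp (-(lam ^ 2 * ‖ξ‖ ^ 2))) := by
              rw [pow_add]; ring
        _ ≤ _ := by gcongr; exact hK _ (norm_nonneg _)
    have hui : Integrable u := hu.continuous.integrable_of_hasCompactSupport husupp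
    have hprod := hg.mul_prod hui
    have hd : Continuous fun q : Rn n × Rn n => dotR q.1 (x - q.2) :=
      continuous_dotR.comp (by fun_prop : Continuous fun q : Rn n × Rn n => (q.1, x - q.2))
    have huc := hu.continuous
    refine Integrable.mono hprod (Continuous.aestronglyMeasurable (by fun_prop))
      (Filter.Eventually.of_forall fun q => ?_)
    simp only [norm_mul, norm_exp_I_mul, one_mul]
    exact le_rfl
  · simp_rw [inner_integral]
    unfold Op
    refine Filter.Tendsto.const_mul _ ?_
    have hd : Continuous fun ξ : Rn n => dotR x ξ :=
      continuous_dotR.comp (by fun_prop : Continuous fun ξ : Rn n => (x, ξ))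
    have hint : Integrable (fun ξ : Rn n =>
        Complex.exp (Complex.I * (dotR x ξ : ℂ)) * p x ξ * fourierT n u ξ) := by
      obtain ⟨K, hK⟩ := hFd (n + 1 + m)
      refine integrable_of_decay (K := C * K)
        (Continuous.aestronglyMeasurable (by fun_prop)) fun ξ => ?_
      rw [norm_mul, norm_mul, norm_exp_I_mul, one_mul]
      calc _ ≤ (1 + ‖ξ‖) ^ (n + 1) * ((C * (1 + ‖ξ‖) ^ m) * ‖fourierT n u ξ‖) := by
              gcongr; exact hC ξ
        _ = C * ((1 + ‖ξ‖) ^ (n + 1 + m) * ‖fourierT n u ξ‖) := by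
              rw [pow_add]; ring
        _ ≤ _ := by gcongr; exact hK _
    refine tendsto_integral_filter_of_dominated_convergence _ ?_ ?_ hint.norm ?_
    · exact Filter.Eventually.of_forall fun lam =>
        Continuous.aestronglyMeasurable (by fun_prop)
    · refine Filter.Eventually.of_forall fun lam => Filter.Eventually.of_forall fun ξ => ?_
      rw [norm_mul, norm_gauss]
      refine mul_le_of_le_one_left (norm_nonneg _) ?_
      rw [Real.exp_le_one_iff]
      have : 0 ≤ lam ^ 2 * ‖ξ‖ ^ 2 := by positivity
      linarith
    · refine Filter.Eventually.of_forall fun ξ => ?_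
      have hcont : Continuous fun lam : ℝ => Complex.exp (-(lam ^ 2 * ‖ξ‖ ^ 2 : ℝ)) *
          (Complex.exp (Complex.I * (dotR x ξ : ℂ)) * p x ξ * fourierT n u ξ) := by fun_prop
      have := (hcont.tendsto 0).mono_left (nhdsWithin_le_nhds (s := {0}ᶜ))
      simpa using this
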